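/- There exists a curve z(α) = (z₁(α), z₂(α)) with the following properties: (1) z₁(α) − α and z₂(α) are real-analytic 2π-periodic functions and z satisfies the arc-chord condition; (2) z is odd, i.e. z(−α) = −z(α); (3) ∂_α z₁(α) > 0 for all α ∉ 2πℤ, ∂_α z₁(0) = 0, and ∂_α z₂(0) > 0; and moreover, defining v₁(α) = ∫_{−π}^{π} [sin(z₁(α) − z₁(β)) (∂_α z₁(α) − ∂_β z₁(β))] / [cosh(z₂(α) − z₂(β)) − cos(z₁(α) − z₁(β))] dβ, one has (∂_α v₁)(0) < 0. (Existence of an analytic curve with vertical tangent at α = 0 whose horizontal Muskat velocity has strictly negative derivative at that point.) -/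

import Mathlib

open Real MeasureTheory Set

noncomputable section

/-- Distance from `β` to `2πℤ`. -/
def distTZ (β : ℝ) : ℝ := |β - 2 * π * ((round (β / (2 * π)) : ℤ) : ℝ)|

/-- `z(α) - (α, 0)` is `2π`-periodic. -/
def PerCurve (z : ℝ → ℝ × ℝ) : Prop := ∀ α, z (α + 2 * π) = z α + (2 * π, 0)

/-- Arc-chord condition. -/
def ArcChord (z : ℝ → ℝ × ℝ) : Prop :=
  ∃ C > 0, ∀ α β : ℝ,
    distTZ β ^ 2 ≤ C * (2 * (Real.cosh ((z α).2 - (z (α - β)).2)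
      - Real.cos ((z α).1 - (z (α - β)).1)))

/-- The horizontal component of the Muskat velocity (ρ² - ρ¹ = 4π). -/
def v1 (z : ℝ → ℝ × ℝ) (α : ℝ) : ℝ :=
  ∫ β in (-π)..π,
    Real.sin ((z α).1 - (z β).1)
      * (deriv (fun a => (z a).1) α - deriv (fun a => (z a).1) β)
      / (Real.cosh ((z α).2 - (z β).2) - Real.cos ((z α).1 - (z β).1))

/-!
After the substitution `β = α + b` the integrand of `v₁` is singular only at `b = 0`, uniformly in
`α`, and one can differentiate under the integral sign. At a point with `z₁' = z₁'' = 0`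
integration by parts in `b` removes all terms but one:
`v₁'(α) = z₂'(α) ∫ sin w₁ (w₁)' sinh w₂ / (cosh w₂ - cos w₁)² db`, with `w(b) = z(α + b) - z(α)`.
For an odd curve with `z₁(x) = x - sin x` the sign of the integrand on `(0, π)` is that of `z₂`, and
the integrand decays as `z₂ → ∞`. A height `z₂` that is huge on `(0, π/2)` and moderately negative
on `(π/2, π)` therefore makes the integral negative while `z₂'(0) > 0`.
-/

open Filter Topology NNReal fwdDiff

lemma one_add_sq_div_two_le_cosh (x : ℝ) : 1 + x ^ 2 / 2 ≤ cosh x := by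
  have cosh_eq : cosh x = 1 + 2 * sinh (x / 2) ^ 2 := by
    rw [show x = 2 * (x / 2) by ring, Real.cosh_two_mul, Real.cosh_sq]
    ring_nf
  have sq_le : (x / 2) ^ 2 ≤ sinh (x / 2) ^ 2 := by
    rw [sq_le_sq, Real.abs_sinh]
    exact Real.self_le_sinh_iff.2 (abs_nonneg _)
  linarith

lemma abs_sinh_le_cosh (x : ℝ) : |sinh x| ≤ cosh x := by
  rw [Real.abs_sinh, ← Real.cosh_abs]
  exact (Real.sinh_lt_cosh _).le

lemma abs_sinh_le_cosh_mul_abs {x R : ℝ} (hx : |x| ≤ R) : |sinh x| ≤ cosh R * |x| := by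
  have hR : 0 ≤ R := (abs_nonneg x).trans hx
  simpa using (convex_Icc (-R) R).norm_image_sub_le_of_norm_deriv_le (𝕜 := ℝ) (f := sinh)
    (C := cosh R) (fun y _ ↦ Real.differentiable_sinh y)
    (fun y hy ↦ by
      rw [Real.deriv_sinh, Real.norm_eq_abs, abs_of_pos (Real.cosh_pos y), Real.cosh_le_cosh,
        abs_of_nonneg hR]
      exact abs_le.2 hy)
    (show (0 : ℝ) ∈ Icc (-R) R from ⟨by linarith, hR⟩) (abs_le.1 hx)

lemma strictMono_sub_sin : StrictMono fun x : ℝ ↦ x - sin x := by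
  intro x y hxy
  have sin_lt : |sin ((y - x) / 2)| < (y - x) / 2 :=
    (Real.abs_sin_lt_abs (by linarith)).trans_eq (abs_of_pos (by linarith))
  have prod_le : sin ((y - x) / 2) * cos ((y + x) / 2) ≤ |sin ((y - x) / 2)| := by
    refine (le_abs_self _).trans ?_
    rw [abs_mul]
    exact mul_le_of_le_one_right (abs_nonneg _) (Real.abs_cos_le_one _)
  have := Real.sin_sub_sin y x
  simp only
  linarith

lemma abs_div_le_div_of_le_mul {n k t A c : ℝ} (hc : 0 < c) (ht : 0 ≤ t) (hA : 0 ≤ A)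
    (hn : |n| ≤ A * t) (hk : c * t ≤ k) : |n / k| ≤ A / c := by
  rcases ht.eq_or_lt with rfl | ht
  · have : n = 0 := by simpa using hn
    simpa [this] using div_nonneg hA hc.le
  · have hk_pos : 0 < k := (mul_pos hc ht).trans_le hk
    rw [abs_div, abs_of_pos hk_pos, div_le_div_iff₀ hk_pos hc]
    calc |n| * c ≤ A * t * c := by gcongr
      _ = A * (c * t) := by ring
      _ ≤ A * k := by gcongr

section Increments

variable {E : Type*} [NormedAddCommGroup E] {f : ℝ → E}

lemma norm_fwdDiff_le {L : ℝ≥0} (hf : LipschitzWith L f) (b x : ℝ) : ‖Δ_[b] f x‖ ≤ L * |b| := by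
  simpa [fwdDiff, dist_eq_norm] using hf.dist_le_mul (x + b) x

lemma continuous_fwdDiff_step (hf : Continuous f) (x : ℝ) : Continuous fun b ↦ Δ_[b] f x := by
  unfold fwdDiff; fun_prop

lemma measurable_fwdDiff_step [MeasurableSpace E] [BorelSpace E] (hf : Continuous f) (x : ℝ) :
    Measurable fun b ↦ Δ_[b] f x :=
  (continuous_fwdDiff_step hf x).measurable

variable [NormedSpace ℝ E]

lemma hasDerivAt_fwdDiff (hf : Differentiable ℝ f) (b x : ℝ) :
    HasDerivAt (Δ_[b] f) (Δ_[b] (deriv f) x) x :=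
  ((hf (x + b)).hasDerivAt.comp_add_const x b).sub (hf x).hasDerivAt

lemma hasDerivAt_fwdDiff_step (hf : Differentiable ℝ f) (b x : ℝ) :
    HasDerivAt (fun t ↦ Δ_[t] f x) (deriv f (x + b)) b :=
  ((hf (x + b)).hasDerivAt.comp_const_add x b).sub_const (f x)

lemma norm_fwdDiff_sub_smul_deriv_le {L : ℝ≥0} (hf : Differentiable ℝ f)
    (hL : LipschitzWith L (deriv f)) (b x : ℝ) :
    ‖Δ_[b] f x - b • deriv f x‖ ≤ L * b ^ 2 := by
  have deriv_sub_le : ∀ y ∈ uIcc x (x + b), ‖deriv f y - deriv f x‖ ≤ L * |b| := by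
    intro y hy
    rw [← dist_eq_norm]
    refine (hL.dist_le_mul y x).trans ?_
    gcongr
    simpa [Real.dist_eq] using abs_sub_left_of_mem_uIcc hy
  have := (convex_uIcc x (x + b)).norm_image_sub_le_of_norm_hasDerivWithin_le
    (f := fun y ↦ f y - y • deriv f x) (f' := fun y ↦ deriv f y - deriv f x)
    (fun y _ ↦ ((hf y).hasDerivAt.sub (by
      simpa using (hasDerivAt_id y).smul_const (deriv f x))).hasDerivWithinAt)
    deriv_sub_le left_mem_uIcc right_mem_uIcc
  calc ‖Δ_[b] f x - b • deriv f x‖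
      = ‖f (x + b) - (x + b) • deriv f x - (f x - x • deriv f x)‖ := by
        rw [fwdDiff, add_smul]; congr 1; abel
    _ ≤ L * |b| * ‖x + b - x‖ := this
    _ = L * b ^ 2 := by rw [add_sub_cancel_left, Real.norm_eq_abs, mul_assoc, ← sq, sq_abs]

lemma periodic_deriv {T : ℝ} (hf : Function.Periodic f T) : Function.Periodic (deriv f) T := by
  intro x
  rw [← deriv_comp_add_const, funext hf]

lemma exists_lipschitzWith_of_periodic_deriv {T : ℝ} (hT : T ≠ 0) (hf : ContDiff ℝ 1 f)
    (hper : Function.Periodic (deriv f) T) : ∃ L : ℝ≥0, LipschitzWith L f := by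
  obtain ⟨C, hC⟩ :=
    (hper.isBounded_of_continuous hT (hf.continuous_deriv le_rfl)).exists_norm_le
  refine ⟨C.toNNReal, lipschitzWith_of_nnnorm_deriv_le (hf.differentiable one_ne_zero) fun x ↦ ?_⟩
  exact NNReal.coe_le_coe.1 ((hC _ ⟨x, rfl⟩).trans (Real.le_coe_toNNReal C))

end Increments

section Prod

variable {γ : ℝ → ℝ × ℝ} {γ' : ℝ × ℝ} {t : ℝ}

lemma hasDerivAt_fst_comp (h : HasDerivAt γ γ' t) : HasDerivAt (fun s ↦ (γ s).1) γ'.1 t := by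
  simpa using h.hasFDerivAt.fst.hasDerivAt

lemma hasDerivAt_snd_comp (h : HasDerivAt γ γ' t) : HasDerivAt (fun s ↦ (γ s).2) γ'.2 t := by
  simpa using h.hasFDerivAt.snd.hasDerivAt

end Prod

/-- Half the denominator in the arc-chord quotient, as a function of the chord `w`. It vanishes
exactly when `w ∈ 2πℤ × {0}` and is comparable to `‖w‖²` near the origin. -/
def chordGap (w : ℝ × ℝ) : ℝ := cosh w.2 - cos w.1

lemma continuous_chordGap : Continuous chordGap := by
  unfold chordGap; fun_prop

lemma chordGap_nonneg (w : ℝ × ℝ) : 0 ≤ chordGap w :=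
  sub_nonneg.2 ((Real.cos_le_one _).trans (Real.one_le_cosh _))

lemma cos_fst_eq_one_of_chordGap_eq_zero {w : ℝ × ℝ} (hw : chordGap w = 0) : cos w.1 = 1 :=
  (Real.cos_le_one _).antisymm <| (Real.one_le_cosh w.2).trans (sub_eq_zero.1 hw).le

lemma chordGap_add_int_mul_two_pi (w : ℝ × ℝ) (n : ℤ) :
    chordGap (w + (n * (2 * π), 0)) = chordGap w := by
  simp [chordGap, Real.cos_add_int_mul_two_pi]

lemma norm_sq_div_eight_le_chordGap {w : ℝ × ℝ} (hw : |w.1| ≤ π) :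
    ‖w‖ ^ 2 / 8 ≤ chordGap w := by
  have cos_le : cos w.1 ≤ 1 - w.1 ^ 2 / 8 := by
    have coeff_le : 1 / 8 ≤ 2 / π ^ 2 := by
      rw [div_le_div_iff₀ (by norm_num) (by positivity)]
      nlinarith [Real.pi_lt_four, Real.pi_pos]
    nlinarith [Real.cos_le_one_sub_mul_cos_sq hw, sq_nonneg w.1]
  have le_cosh := one_add_sq_div_two_le_cosh w.2
  have norm_sq_le : ‖w‖ ^ 2 ≤ w.1 ^ 2 + w.2 ^ 2 := by
    rcases max_choice ‖w.1‖ ‖w.2‖ with h | h <;> rw [Prod.norm_def, h, Real.norm_eq_abs, sq_abs]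
    · exact le_add_of_nonneg_right (sq_nonneg _)
    · exact le_add_of_nonneg_left (sq_nonneg _)
  rw [chordGap]
  linarith [sq_nonneg w.2]

lemma hasDerivAt_chordGap_comp {γ : ℝ → ℝ × ℝ} {γ' : ℝ × ℝ} {t : ℝ} (h : HasDerivAt γ γ' t) :
    HasDerivAt (fun s ↦ chordGap (γ s))
      (sinh (γ t).2 * γ'.2 + sin (γ t).1 * γ'.1) t := by
  refine ((hasDerivAt_snd_comp h).cosh.sub (hasDerivAt_fst_comp h).cos).congr_deriv ?_
  ring

section Curve

variable {z : ℝ → ℝ × ℝ}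

lemma perCurve_add_int_mul (hper : PerCurve z) (α : ℝ) (n : ℤ) :
    z (α + n * (2 * π)) = z α + (n * (2 * π), 0) := by
  have hsub : Function.Periodic (fun x ↦ z x - (x, 0)) (2 * π) := fun x ↦ by
    simp only [hper x]
    ext <;> simp
  have := hsub.int_mul n α
  simp only [sub_eq_iff_eq_add] at this
  rw [this]
  ext
  · simp only [Prod.fst_add, Prod.fst_sub]
    ring
  · simp

lemma perCurve_periodic_deriv (hper : PerCurve z) : Function.Periodic (deriv z) (2 * π) := by
  intro α
  rw [← deriv_comp_add_const, funext hper, deriv_add_const]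

lemma chordGap_fwdDiff_sub_int_mul (hper : PerCurve z) (α b : ℝ) (n : ℤ) :
    chordGap (Δ_[b - n * (2 * π)] z α) = chordGap (Δ_[b] z α) := by
  rw [← chordGap_add_int_mul_two_pi _ n]
  congr 1
  have := perCurve_add_int_mul hper (α + (b - n * (2 * π))) n
  rw [show α + (b - n * (2 * π)) + n * (2 * π) = α + b by ring] at this
  rw [fwdDiff, fwdDiff, this]
  abel

lemma chordGap_fwdDiff_add_two_pi (hper : PerCurve z) (b : ℝ) :
    Function.Periodic (fun α ↦ chordGap (Δ_[b] z α)) (2 * π) := by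
  intro α
  simp only [fwdDiff, hper α, show α + 2 * π + b = α + b + 2 * π by ring, hper (α + b),
    add_sub_add_right_eq_sub]

lemma distTZ_eq_abs {b : ℝ} (hb : |b| ≤ π) : distTZ b = |b| := by
  have two_pi_pos := Real.two_pi_pos
  have distTZ_eq : distTZ b = 2 * π * |b / (2 * π) - round (b / (2 * π))| := by
    rw [distTZ, ← abs_of_pos two_pi_pos, ← abs_mul, abs_of_pos two_pi_pos, mul_sub,
      mul_div_cancel₀ _ two_pi_pos.ne']
  have abs_eq : |b| = 2 * π * |b / (2 * π)| := by
    rw [abs_div, abs_of_pos two_pi_pos, mul_div_cancel₀ _ two_pi_pos.ne']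
  have half : |b / (2 * π)| ≤ 1 / 2 := by
    rw [abs_div, abs_of_pos two_pi_pos, div_le_iff₀ two_pi_pos]
    linarith
  rw [distTZ_eq, abs_eq]
  congr 1
  refine le_antisymm (by simpa using round_le (b / (2 * π)) 0) ?_
  set n := round (b / (2 * π))
  by_cases hn0 : n = 0
  · simp [hn0]
  · have one_le : (1 : ℝ) ≤ |(n : ℝ)| := mod_cast Int.one_le_abs hn0
    have := abs_sub_abs_le_abs_sub (n : ℝ) (b / (2 * π))
    rw [abs_sub_comm] at this
    linarith

lemma exists_distTZ_eq_abs (β : ℝ) : ∃ n : ℤ, distTZ β = |β - n * (2 * π)| ∧ distTZ β ≤ π := by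
  have two_pi_pos := Real.two_pi_pos
  refine ⟨round (β / (2 * π)), by rw [distTZ, mul_comm (2 * π)], ?_⟩
  have := mul_le_mul_of_nonneg_right (abs_sub_round (β / (2 * π))) two_pi_pos.le
  rw [← abs_of_pos two_pi_pos, ← abs_mul, abs_of_pos two_pi_pos, sub_mul,
    div_mul_cancel₀ _ two_pi_pos.ne'] at this
  rw [distTZ, mul_comm (2 * π)]
  linarith

lemma arcChord_iff (hper : PerCurve z) :
    ArcChord z ↔ ∃ c > 0, ∀ α b : ℝ, |b| ≤ π → c * b ^ 2 ≤ chordGap (Δ_[b] z α) := by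
  constructor
  · rintro ⟨C, hC, hz⟩
    refine ⟨1 / (2 * C), by positivity, fun α b hb ↦ ?_⟩
    have := hz (α + b) b
    rw [distTZ_eq_abs hb, sq_abs, add_sub_cancel_right] at this
    change b ^ 2 ≤ C * (2 * chordGap (Δ_[b] z α)) at this
    rw [one_div, inv_mul_le_iff₀ (by positivity)]
    linarith
  · rintro ⟨c, hc, hz⟩
    refine ⟨1 / (2 * c), by positivity, fun α β ↦ ?_⟩
    obtain ⟨n, dist_eq, dist_le⟩ := exists_distTZ_eq_abs β
    have := hz (α - β) (β - n * (2 * π)) (dist_eq ▸ dist_le)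
    rw [chordGap_fwdDiff_sub_int_mul hper, ← sq_abs, ← dist_eq, fwdDiff, sub_add_cancel] at this
    change distTZ β ^ 2 ≤ 1 / (2 * c) * (2 * chordGap (z α - z (α - β)))
    rw [one_div, le_inv_mul_iff₀ (by positivity)]
    linarith

lemma chordGap_fwdDiff_ne_zero (hper : PerCurve z) (harc : ArcChord z) (α : ℝ) {b : ℝ}
    (hb : |b| ≤ π) (hb0 : b ≠ 0) : chordGap (Δ_[b] z α) ≠ 0 := by
  obtain ⟨c, hc, gap_ge⟩ := (arcChord_iff hper).1 harc
  exact ((mul_pos hc (by positivity)).trans_le (gap_ge α b hb)).ne'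

lemma exists_le_chordGap_near (hz : ContDiff ℝ 2 z) (hper : PerCurve z)
    (hreg : ∀ α, deriv z α ≠ 0) :
    ∃ δ > 0, ∃ c > 0, ∀ α b : ℝ, |b| ≤ δ → c * b ^ 2 ≤ chordGap (Δ_[b] z α) := by
  have hz' : ContDiff ℝ 1 (deriv z) := hz.deriv'
  have hper' := perCurve_periodic_deriv hper
  obtain ⟨L₀, hL₀⟩ := exists_lipschitzWith_of_periodic_deriv Real.two_pi_pos.ne'
    (hz.of_le one_le_two) hper'
  obtain ⟨L₁, hL₁⟩ := exists_lipschitzWith_of_periodic_deriv Real.two_pi_pos.ne' hz'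
    (periodic_deriv hper')
  obtain ⟨κ, hκ, speed⟩ : ∃ κ > 0, ∀ α, κ ≤ ‖deriv z α‖ := by
    obtain ⟨κ, hκ, h⟩ := (hper'.compact_of_continuous Real.two_pi_pos.ne'
      hz'.continuous).exists_forall_le' continuous_norm.continuousOn (a := 0)
      (by rintro _ ⟨α, rfl⟩; exact norm_pos_iff.2 (hreg α))
    exact ⟨κ, hκ, fun α ↦ h _ ⟨α, rfl⟩⟩
  refine ⟨min (κ / (2 * (L₁ + 1))) (1 / (L₀ + 1)), by positivity, κ ^ 2 / 32, by positivity,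
    fun α b hb ↦ ?_⟩
  have L₁_mul_le : L₁ * |b| ≤ κ / 2 := by
    have := hb.trans (min_le_left _ _)
    rw [le_div_iff₀ (by positivity)] at this
    linarith [abs_nonneg b]
  have fst_le : |(Δ_[b] z α).1| ≤ π := by
    have := hb.trans (min_le_right _ _)
    rw [le_div_iff₀ (by positivity)] at this
    linarith [norm_fst_le (Δ_[b] z α), norm_fwdDiff_le hL₀ b α, abs_nonneg b, Real.pi_gt_three,
      Real.norm_eq_abs (Δ_[b] z α).1]
  have le_norm : κ / 2 * |b| ≤ ‖Δ_[b] z α‖ := by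
    have taylor := norm_fwdDiff_sub_smul_deriv_le (hz.differentiable two_ne_zero) hL₁ b α
    have triangle := norm_sub_norm_le (b • deriv z α) (Δ_[b] z α)
    rw [norm_sub_rev, norm_smul, Real.norm_eq_abs] at triangle
    have speed_mul := mul_le_mul_of_nonneg_left (speed α) (abs_nonneg b)
    have error_le := mul_le_mul_of_nonneg_right L₁_mul_le (abs_nonneg b)
    rw [mul_assoc, ← sq, sq_abs] at error_le
    linarith
  calc κ ^ 2 / 32 * b ^ 2 = (κ / 2 * |b|) ^ 2 / 8 := by rw [mul_pow, sq_abs]; ring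
    _ ≤ ‖Δ_[b] z α‖ ^ 2 / 8 := by gcongr
    _ ≤ chordGap (Δ_[b] z α) := norm_sq_div_eight_le_chordGap fst_le

lemma exists_le_chordGap_far (hz : Continuous z) (hper : PerCurve z)
    (hinj : ∀ α b, chordGap (Δ_[b] z α) = 0 → ∃ n : ℤ, b = n * (2 * π)) {δ : ℝ} (hδ : 0 < δ) :
    ∃ m > 0, ∀ α b : ℝ, δ ≤ |b| → |b| ≤ π → m ≤ chordGap (Δ_[b] z α) := by
  have gap_pos : ∀ α b : ℝ, δ ≤ |b| → |b| ≤ π → 0 < chordGap (Δ_[b] z α) := by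
    intro α b hδb hb
    refine (chordGap_nonneg _).lt_of_ne' fun h ↦ ?_
    obtain ⟨n, rfl⟩ := hinj α b h
    rw [abs_mul, abs_of_pos Real.two_pi_pos] at hb hδb
    have abs_lt_one : |(n : ℝ)| < 1 := by
      by_contra! h
      nlinarith [Real.pi_pos]
    have : n = 0 := Int.abs_lt_one_iff.1 (mod_cast abs_lt_one)
    simp only [this, Int.cast_zero, abs_zero, zero_mul] at hδb
    exact hδb.not_gt hδ
  have hcompact : IsCompact (Icc 0 (2 * π) ×ˢ (Icc (-π) π ∩ {b : ℝ | δ ≤ |b|})) :=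
    isCompact_Icc.prod (isCompact_Icc.inter_right (isClosed_le continuous_const continuous_abs))
  have hcont : Continuous fun p : ℝ × ℝ ↦ chordGap (Δ_[p.2] z p.1) := by
    unfold fwdDiff
    exact continuous_chordGap.comp (by fun_prop)
  obtain ⟨m, hm, hle⟩ := hcompact.exists_forall_le' hcont.continuousOn (a := 0)
    (fun p hp ↦ gap_pos p.1 p.2 hp.2.2 (abs_le.2 hp.2.1))
  refine ⟨m, hm, fun α b hδb hb ↦ ?_⟩
  obtain ⟨α₀, hα₀, gap_eq⟩ :=
    (chordGap_fwdDiff_add_two_pi hper b).exists_mem_Ico₀ Real.two_pi_pos α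
  simp only [gap_eq]
  exact hle (α₀, b) ⟨Ico_subset_Icc_self hα₀, abs_le.1 hb, hδb⟩

theorem arcChord_of_regular_of_injective (hz : ContDiff ℝ 2 z) (hper : PerCurve z)
    (hreg : ∀ α, deriv z α ≠ 0)
    (hinj : ∀ α b, chordGap (Δ_[b] z α) = 0 → ∃ n : ℤ, b = n * (2 * π)) : ArcChord z := by
  obtain ⟨δ, hδ, c, hc, near⟩ := exists_le_chordGap_near hz hper hreg
  obtain ⟨m, hm, far⟩ := exists_le_chordGap_far hz.continuous hper hinj hδ
  refine (arcChord_iff hper).2 ⟨min c (m / π ^ 2), by positivity, fun α b hb ↦ ?_⟩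
  rcases le_total |b| δ with hbδ | hbδ
  · exact (mul_le_mul_of_nonneg_right (min_le_left _ _) (sq_nonneg b)).trans (near α b hbδ)
  · have b_sq_le : b ^ 2 ≤ π ^ 2 := by rw [← sq_abs]; gcongr
    calc min c (m / π ^ 2) * b ^ 2 ≤ m / π ^ 2 * π ^ 2 := by gcongr; exact min_le_right _ _
      _ = m := by field_simp
      _ ≤ chordGap (Δ_[b] z α) := far α b hbδ hb

lemma eq_int_mul_two_pi_of_chordGap_eq_zero (hper : PerCurve z)
    (hmono : StrictMono fun α ↦ (z α).1) {α b : ℝ} (hgap : chordGap (Δ_[b] z α) = 0) :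
    ∃ n : ℤ, b = n * (2 * π) := by
  obtain ⟨n, hn⟩ := (Real.cos_eq_one_iff _).1 (cos_fst_eq_one_of_chordGap_eq_zero hgap)
  have fst_eq : (z (α + b)).1 = (z (α + n * (2 * π))).1 := by
    rw [perCurve_add_int_mul hper, Prod.fst_add, hn, fwdDiff, Prod.fst_sub]
    ring
  exact ⟨n, add_left_cancel (hmono.injective fst_eq)⟩

end Curve

/-- The integrand of `v1` as a function of the chord `w = z(β) - z(α)` and of the increment
`u = z₁'(β) - z₁'(α)`; it is invariant under `(w, u) ↦ (-w, -u)`. -/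
def velocityKernel (w : ℝ × ℝ) (u : ℝ) : ℝ := sin w.1 * u / chordGap w

/-- The derivative of `velocityKernel` at `(w, u)` in the direction `(w', u')`. -/
def velocityKernelDeriv (w w' : ℝ × ℝ) (u u' : ℝ) : ℝ :=
  (cos w.1 * w'.1 * u + sin w.1 * u') / chordGap w -
    sin w.1 * u * (sinh w.2 * w'.2 + sin w.1 * w'.1) / chordGap w ^ 2

lemma hasDerivAt_velocityKernel {γ : ℝ → ℝ × ℝ} {υ : ℝ → ℝ} {γ' : ℝ × ℝ} {υ' t : ℝ}
    (hγ : HasDerivAt γ γ' t) (hυ : HasDerivAt υ υ' t) (hgap : chordGap (γ t) ≠ 0) :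
    HasDerivAt (fun s ↦ velocityKernel (γ s) (υ s))
      (velocityKernelDeriv (γ t) γ' (υ t) υ') t := by
  refine (((hasDerivAt_fst_comp hγ).sin.mul hυ).div
    (hasDerivAt_chordGap_comp hγ) hgap).congr_deriv ?_
  rw [velocityKernelDeriv, Pi.mul_apply]
  field_simp

lemma abs_velocityKernel_le {w : ℝ × ℝ} {u A c r : ℝ} (hc : 0 < c) (hA : 0 ≤ A) (hr : 0 ≤ r)
    (hw : |w.1| ≤ A * r) (hu : |u| ≤ A * r) (hgap : c * r ^ 2 ≤ chordGap w) :
    |velocityKernel w u| ≤ A ^ 2 / c := by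
  refine abs_div_le_div_of_le_mul hc (sq_nonneg r) (sq_nonneg A) ?_ hgap
  calc |sin w.1 * u| ≤ (A * r) * (A * r) := by
        rw [abs_mul]; gcongr; exact Real.abs_sin_le_abs.trans hw
    _ = A ^ 2 * r ^ 2 := by ring

lemma abs_velocityKernelDeriv_le {w w' : ℝ × ℝ} {u u' A c r : ℝ} (hc : 0 < c) (hA : 0 ≤ A)
    (hr : 0 ≤ r) (hw : |w.1| ≤ A * r) (hsinh : |sinh w.2| ≤ A * r) (hw' : ‖w'‖ ≤ A * r)
    (hu : |u| ≤ A * r) (hu' : |u'| ≤ A * r) (hgap : c * r ^ 2 ≤ chordGap w) :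
    |velocityKernelDeriv w w' u u'| ≤ 2 * A ^ 2 / c + 2 * A ^ 4 / c ^ 2 := by
  have hsin : |sin w.1| ≤ A * r := Real.abs_sin_le_abs.trans hw
  have hw'₁ : |w'.1| ≤ A * r := (norm_fst_le w').trans hw'
  have hw'₂ : |w'.2| ≤ A * r := (norm_snd_le w').trans hw'
  have gap_deriv_le : |sinh w.2 * w'.2 + sin w.1 * w'.1| ≤ 2 * A ^ 2 * r ^ 2 := by
    refine (abs_add_le _ _).trans ?_
    rw [abs_mul, abs_mul]
    calc _ ≤ A * r * (A * r) + A * r * (A * r) := by gcongr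
      _ = 2 * A ^ 2 * r ^ 2 := by ring
  refine (abs_sub _ _).trans (add_le_add ?_ ?_)
  · refine abs_div_le_div_of_le_mul hc (sq_nonneg r) (by positivity) ?_ hgap
    refine (abs_add_le _ _).trans ?_
    rw [abs_mul, abs_mul, abs_mul]
    calc _ ≤ 1 * (A * r) * (A * r) + A * r * (A * r) := by gcongr; exact Real.abs_cos_le_one _
      _ = 2 * A ^ 2 * r ^ 2 := by ring
  · refine abs_div_le_div_of_le_mul (t := (r ^ 2) ^ 2) (by positivity) (by positivity)
      (by positivity) ?_ (by rw [← mul_pow]; gcongr)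
    rw [abs_mul, abs_mul]
    calc _ ≤ A * r * (A * r) * (2 * A ^ 2 * r ^ 2) := by gcongr
      _ = 2 * A ^ 4 * (r ^ 2) ^ 2 := by ring

/-- The integrand of `∂_α v₁ / ∂_α z₂` at a point with vertical tangent, in the variables of
`velocityKernel`. -/
def tangencyDensity (w : ℝ × ℝ) (u : ℝ) : ℝ := sin w.1 * u * sinh w.2 / chordGap w ^ 2

lemma abs_tangencyDensity_le (w : ℝ × ℝ) (u : ℝ) :
    |tangencyDensity w u| ≤ |sin w.1 * u / chordGap w| + |sin w.1 * u / chordGap w ^ 2| := by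
  have sinh_le : |sinh w.2| ≤ chordGap w + 1 :=
    (abs_sinh_le_cosh _).trans (by rw [chordGap]; linarith [Real.cos_le_one w.1])
  have gap_nonneg := chordGap_nonneg w
  rw [tangencyDensity, abs_div, abs_mul, abs_div, abs_div, abs_of_nonneg gap_nonneg,
    abs_of_nonneg (pow_nonneg gap_nonneg 2)]
  rcases gap_nonneg.eq_or_lt with h | h
  · simp [← h]
  · calc _ ≤ |sin w.1 * u| * (chordGap w + 1) / chordGap w ^ 2 := by gcongr
      _ = _ := by field_simp

lemma abs_tangencyDensity_le_of_le_chordGap {w : ℝ × ℝ} {u A c b : ℝ} (hc : 0 < c) (hA : 0 ≤ A)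
    (hnum : |sin w.1 * u| ≤ A * b ^ 4) (hgap : c * b ^ 2 ≤ chordGap w) :
    |tangencyDensity w u| ≤ A * b ^ 2 / c + A / c ^ 2 := by
  refine (abs_tangencyDensity_le w u).trans (add_le_add ?_ ?_)
  · exact abs_div_le_div_of_le_mul hc (sq_nonneg b) (by positivity)
      (hnum.trans_eq (by ring)) hgap
  · refine abs_div_le_div_of_le_mul (t := b ^ 4) (by positivity) (by positivity) hA hnum ?_
    rw [show c ^ 2 * b ^ 4 = (c * b ^ 2) ^ 2 by ring]
    gcongr

lemma velocityKernelDeriv_sub_eq {w w' p : ℝ × ℝ} {u u' : ℝ} (hp : p.1 = 0) :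
    velocityKernelDeriv w (w' - p) u u' - velocityKernelDeriv w w' u u' =
      p.2 * tangencyDensity w u := by
  simp only [velocityKernelDeriv, tangencyDensity, Prod.fst_sub, Prod.snd_sub, hp, sub_zero]
  ring

lemma measurable_velocityKernel {γ : ℝ → ℝ × ℝ} {υ : ℝ → ℝ} (hγ : Measurable γ)
    (hυ : Measurable υ) : Measurable fun t ↦ velocityKernel (γ t) (υ t) :=
  (hγ.fst.sin.mul hυ).div (continuous_chordGap.measurable.comp hγ)

lemma measurable_velocityKernelDeriv {γ γ' : ℝ → ℝ × ℝ} {υ υ' : ℝ → ℝ} (hγ : Measurable γ)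
    (hγ' : Measurable γ') (hυ : Measurable υ) (hυ' : Measurable υ') :
    Measurable fun t ↦ velocityKernelDeriv (γ t) (γ' t) (υ t) (υ' t) :=
  have hgap := continuous_chordGap.measurable.comp hγ
  (((hγ.fst.cos.mul hγ'.fst).mul hυ).add (hγ.fst.sin.mul hυ') |>.div hgap).sub
    (((hγ.fst.sin.mul hυ).mul
      ((hγ.snd.sinh.mul hγ'.snd).add (hγ.fst.sin.mul hγ'.fst))).div (hgap.pow_const 2))

lemma measurable_tangencyDensity {γ : ℝ → ℝ × ℝ} {υ : ℝ → ℝ} (hγ : Measurable γ)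
    (hυ : Measurable υ) : Measurable fun t ↦ tangencyDensity (γ t) (υ t) :=
  ((hγ.fst.sin.mul hυ).mul hγ.snd.sinh).div
    ((continuous_chordGap.measurable.comp hγ).pow_const 2)

lemma abs_le_pi_of_mem_uIoc {b : ℝ} (hb : b ∈ uIoc (-π) π) : |b| ≤ π := by
  rw [uIoc_of_le (by linarith [Real.pi_pos])] at hb
  exact abs_le.2 ⟨hb.1.le, hb.2⟩

lemma intervalIntegrable_of_abs_le {f : ℝ → ℝ} {a b C : ℝ} (hf : Measurable f)
    (hC : ∀ x ∈ uIoc a b, |f x| ≤ C) : IntervalIntegrable f volume a b :=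
  intervalIntegrable_const.mono_fun' hf.aestronglyMeasurable
    ((ae_restrict_iff' measurableSet_uIoc).2 (.of_forall hC))

section Velocity

variable {z : ℝ → ℝ × ℝ}

lemma v1_eq_integral_velocityKernel (hz : Differentiable ℝ z) (hper : PerCurve z) (α : ℝ) :
    v1 z α = ∫ b in (-π)..π, velocityKernel (Δ_[b] z α) (Δ_[b] (deriv z) α).1 := by
  have deriv_fst (x : ℝ) : deriv (fun a ↦ (z a).1) x = (deriv z x).1 :=
    (hasDerivAt_fst_comp (hz x).hasDerivAt).deriv
  set f : ℝ → ℝ := fun β ↦ velocityKernel (z β - z α) (deriv z β - deriv z α).1 with hf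
  have periodic_f : Function.Periodic f (2 * π) := by
    intro β
    have sub_eq : z β + (2 * π, 0) - z α = z β - z α + ((1 : ℤ) * (2 * π), 0) := by
      simp only [Int.cast_one, one_mul]; abel
    simp only [hf, velocityKernel, hper β, perCurve_periodic_deriv hper β, sub_eq,
      chordGap_add_int_mul_two_pi, Prod.fst_add, Real.sin_add_int_mul_two_pi]
  have v1_eq : v1 z α = ∫ β in (-π)..π, f β := by
    refine intervalIntegral.integral_congr fun β _ ↦ ?_
    simp only [hf, velocityKernel, chordGap, Prod.fst_sub, Prod.snd_sub, deriv_fst,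
      ← neg_sub (z β).1, ← neg_sub (z β).2, ← neg_sub (deriv z β).1, Real.sin_neg, Real.cos_neg,
      Real.cosh_neg, neg_mul_neg]
  have shift := periodic_f.intervalIntegral_add_eq (α + -π) (-π)
  rw [show α + -π + 2 * π = α + π by ring, show -π + 2 * π = π by ring] at shift
  rw [v1_eq, ← shift, ← intervalIntegral.integral_comp_add_left f α]
  rfl

/-- On `|b| ≤ π` every increment entering `∂_α v₁`, and the hyperbolic sine of the vertical one,
is `O(b)`. Three derivatives are needed for the increment of `z₁''`, without which the kernel of
`∂_α v₁` would not be bounded. -/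
lemma exists_increments_le (hz : ContDiff ℝ 3 z) (hper : PerCurve z) :
    ∃ A ≥ 0, ∀ α b : ℝ, |b| ≤ π → ‖Δ_[b] z α‖ ≤ A * |b| ∧ |sinh (Δ_[b] z α).2| ≤ A * |b| ∧
      ‖Δ_[b] (deriv z) α‖ ≤ A * |b| ∧ ‖Δ_[b] (deriv (deriv z)) α‖ ≤ A * |b| := by
  have hz' : ContDiff ℝ 2 (deriv z) := hz.deriv'
  have hz'' : ContDiff ℝ 1 (deriv (deriv z)) := hz'.deriv'
  have hper' := perCurve_periodic_deriv hper
  have two_pi_ne := Real.two_pi_pos.ne'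
  obtain ⟨L₀, hL₀⟩ := exists_lipschitzWith_of_periodic_deriv two_pi_ne
    (hz.of_le (by norm_num)) hper'
  obtain ⟨L₁, hL₁⟩ := exists_lipschitzWith_of_periodic_deriv two_pi_ne
    (hz'.of_le one_le_two) (periodic_deriv hper')
  obtain ⟨L₂, hL₂⟩ := exists_lipschitzWith_of_periodic_deriv two_pi_ne hz''
    (periodic_deriv (periodic_deriv hper'))
  refine ⟨cosh (L₀ * π) * L₀ + L₁ + L₂, by positivity, fun α b hb ↦ ?_⟩
  have L₀_le : (L₀ : ℝ) ≤ cosh (L₀ * π) * L₀ :=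
    le_mul_of_one_le_left L₀.2 (Real.one_le_cosh _)
  have snd_le : |(Δ_[b] z α).2| ≤ L₀ * |b| := (norm_snd_le _).trans (norm_fwdDiff_le hL₀ b α)
  have sinh_le : |sinh (Δ_[b] z α).2| ≤ cosh (L₀ * π) * L₀ * |b| := by
    rw [mul_assoc]
    refine (abs_sinh_le_cosh_mul_abs (R := L₀ * π) (snd_le.trans ?_)).trans ?_ <;> gcongr
  refine ⟨(norm_fwdDiff_le hL₀ b α).trans ?_, sinh_le.trans ?_, (norm_fwdDiff_le hL₁ b α).trans ?_,
    (norm_fwdDiff_le hL₂ b α).trans ?_⟩ <;> gcongr <;>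
    linarith [L₀.coe_nonneg, L₁.coe_nonneg, L₂.coe_nonneg]

lemma exists_abs_velocityKernel_fwdDiff_le (hz : ContDiff ℝ 3 z) (hper : PerCurve z)
    (harc : ArcChord z) :
    ∃ B, ∀ α b : ℝ, |b| ≤ π → |velocityKernel (Δ_[b] z α) (Δ_[b] (deriv z) α).1| ≤ B ∧
      |velocityKernelDeriv (Δ_[b] z α) (Δ_[b] (deriv z) α) (Δ_[b] (deriv z) α).1
        (Δ_[b] (deriv (deriv z)) α).1| ≤ B := by
  obtain ⟨c, hc, gap_ge⟩ := (arcChord_iff hper).1 harc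
  obtain ⟨A, hA, increments_le⟩ := exists_increments_le hz hper
  refine ⟨max (A ^ 2 / c) (2 * A ^ 2 / c + 2 * A ^ 4 / c ^ 2), fun α b hb ↦ ?_⟩
  obtain ⟨hw, hsinh, hw', hw''⟩ := increments_le α b hb
  have hgap : c * |b| ^ 2 ≤ chordGap (Δ_[b] z α) := by simpa using gap_ge α b hb
  exact ⟨(abs_velocityKernel_le hc hA (abs_nonneg b) ((norm_fst_le _).trans hw)
      ((norm_fst_le _).trans hw') hgap).trans (le_max_left _ _),
    (abs_velocityKernelDeriv_le hc hA (abs_nonneg b) ((norm_fst_le _).trans hw) hsinh hw'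
      ((norm_fst_le _).trans hw') ((norm_fst_le _).trans hw'') hgap).trans (le_max_right _ _)⟩

lemma intervalIntegrable_velocityKernelDeriv (hz : ContDiff ℝ 3 z) (hper : PerCurve z)
    (harc : ArcChord z) (α : ℝ) :
    IntervalIntegrable (fun b ↦ velocityKernelDeriv (Δ_[b] z α) (Δ_[b] (deriv z) α)
      (Δ_[b] (deriv z) α).1 (Δ_[b] (deriv (deriv z)) α).1) volume (-π) π := by
  obtain ⟨B, kernels_le⟩ := exists_abs_velocityKernel_fwdDiff_le hz hper harc
  have hz' : ContDiff ℝ 2 (deriv z) := hz.deriv'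
  have measurable_z' := measurable_fwdDiff_step hz'.continuous α
  exact intervalIntegrable_of_abs_le
    (measurable_velocityKernelDeriv (measurable_fwdDiff_step hz.continuous α) measurable_z'
      measurable_z'.fst (measurable_fwdDiff_step (hz'.continuous_deriv one_le_two) α).fst)
    fun b hb ↦ (kernels_le α b (abs_le_pi_of_mem_uIoc hb)).2

/-- Differentiation under the integral sign; the change of variables `β = α + b` has moved the
singularity of the kernel to the fixed point `b = 0`. -/
theorem hasDerivAt_v1 (hz : ContDiff ℝ 3 z) (hper : PerCurve z) (harc : ArcChord z) (α : ℝ) :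
    HasDerivAt (v1 z) (∫ b in (-π)..π, velocityKernelDeriv (Δ_[b] z α) (Δ_[b] (deriv z) α)
      (Δ_[b] (deriv z) α).1 (Δ_[b] (deriv (deriv z)) α).1) α := by
  obtain ⟨B, kernels_le⟩ := exists_abs_velocityKernel_fwdDiff_le hz hper harc
  have hz' : ContDiff ℝ 2 (deriv z) := hz.deriv'
  have hdiff : Differentiable ℝ z := hz.differentiable three_ne_zero
  have measurable_F (a : ℝ) := measurable_velocityKernel
    (measurable_fwdDiff_step hz.continuous a) (measurable_fwdDiff_step hz'.continuous a).fst
  rw [show v1 z = _ from funext (v1_eq_integral_velocityKernel hdiff hper)]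
  refine (intervalIntegral.hasDerivAt_integral_of_dominated_loc_of_deriv_le (s := univ)
    (F := fun a b ↦ velocityKernel (Δ_[b] z a) (Δ_[b] (deriv z) a).1)
    (F' := fun a b ↦ velocityKernelDeriv (Δ_[b] z a) (Δ_[b] (deriv z) a)
      (Δ_[b] (deriv z) a).1 (Δ_[b] (deriv (deriv z)) a).1)
    (bound := fun _ ↦ B) univ_mem
    (.of_forall fun a ↦ (measurable_F a).aestronglyMeasurable)
    (intervalIntegrable_of_abs_le (measurable_F α)
      fun b hb ↦ (kernels_le α b (abs_le_pi_of_mem_uIoc hb)).1)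
    (intervalIntegrable_velocityKernelDeriv hz hper harc α).def'.aestronglyMeasurable
    (.of_forall fun b hb a _ ↦ (kernels_le a b (abs_le_pi_of_mem_uIoc hb)).2)
    intervalIntegrable_const (.of_forall fun b hb a _ ↦ ?_)).2
  rcases eq_or_ne b 0 with rfl | hb0
  · simpa [velocityKernel, velocityKernelDeriv, fwdDiff] using hasDerivAt_const a (0 : ℝ)
  · exact hasDerivAt_velocityKernel (hasDerivAt_fwdDiff hdiff b a)
      (hasDerivAt_fst_comp (hasDerivAt_fwdDiff (hz'.differentiable two_ne_zero) b a))
      (chordGap_fwdDiff_ne_zero hper harc a (abs_le_pi_of_mem_uIoc hb) hb0)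

section VerticalTangent

variable {α : ℝ}

lemma exists_abs_sin_mul_fwdDiff_le (hz : ContDiff ℝ 3 z) (hper : PerCurve z)
    (h₁ : (deriv z α).1 = 0) (h₂ : (deriv (deriv z) α).1 = 0) :
    ∃ A ≥ 0, ∀ b : ℝ, |sin (Δ_[b] z α).1 * (Δ_[b] (deriv z) α).1| ≤ A * b ^ 4 := by
  have hz' : ContDiff ℝ 2 (deriv z) := hz.deriv'
  have hz'' : ContDiff ℝ 1 (deriv (deriv z)) := hz'.deriv'
  have periodic_z'' := periodic_deriv (perCurve_periodic_deriv hper)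
  obtain ⟨L₁, hL₁⟩ := exists_lipschitzWith_of_periodic_deriv Real.two_pi_pos.ne'
    (hz'.of_le one_le_two) periodic_z''
  obtain ⟨L₂, hL₂⟩ := exists_lipschitzWith_of_periodic_deriv Real.two_pi_pos.ne' hz''
    (periodic_deriv periodic_z'')
  refine ⟨L₁ * L₂, by positivity, fun b ↦ ?_⟩
  have taylor₁ := (norm_fst_le _).trans
    (norm_fwdDiff_sub_smul_deriv_le (hz.differentiable three_ne_zero) hL₁ b α)
  have taylor₂ := (norm_fst_le _).trans
    (norm_fwdDiff_sub_smul_deriv_le (hz'.differentiable two_ne_zero) hL₂ b α)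
  rw [Prod.fst_sub, Prod.smul_fst, h₁, smul_zero, sub_zero, Real.norm_eq_abs] at taylor₁
  rw [Prod.fst_sub, Prod.smul_fst, h₂, smul_zero, sub_zero, Real.norm_eq_abs] at taylor₂
  rw [abs_mul]
  calc _ ≤ (L₁ * b ^ 2) * (L₂ * b ^ 2) := by gcongr; exact Real.abs_sin_le_abs.trans taylor₁
    _ = L₁ * L₂ * b ^ 4 := by ring

lemma intervalIntegrable_tangencyDensity (hz : ContDiff ℝ 3 z) (hper : PerCurve z)
    (harc : ArcChord z) (h₁ : (deriv z α).1 = 0) (h₂ : (deriv (deriv z) α).1 = 0) :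
    IntervalIntegrable (fun b ↦ tangencyDensity (Δ_[b] z α) (Δ_[b] (deriv z) α).1)
      volume (-π) π := by
  obtain ⟨c, hc, gap_ge⟩ := (arcChord_iff hper).1 harc
  obtain ⟨A, hA, num_le⟩ := exists_abs_sin_mul_fwdDiff_le hz hper h₁ h₂
  refine intervalIntegrable_of_abs_le (C := A * π ^ 2 / c + A / c ^ 2)
    (measurable_tangencyDensity (measurable_fwdDiff_step hz.continuous α)
      (measurable_fwdDiff_step (hz.continuous_deriv (by norm_num)) α).fst) fun b hb ↦ ?_
  have hb := abs_le_pi_of_mem_uIoc hb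
  refine (abs_tangencyDensity_le_of_le_chordGap hc hA (num_le b) (gap_ge α b hb)).trans ?_
  rw [← sq_abs b]
  gcongr

lemma continuousOn_velocityKernel_fwdDiff (hz : ContDiff ℝ 3 z) (hper : PerCurve z)
    (harc : ArcChord z) (h₁ : (deriv z α).1 = 0) (h₂ : (deriv (deriv z) α).1 = 0) :
    ContinuousOn (fun b ↦ velocityKernel (Δ_[b] z α) (Δ_[b] (deriv z) α).1) (Icc (-π) π) := by
  obtain ⟨c, hc, gap_ge⟩ := (arcChord_iff hper).1 harc
  obtain ⟨A, hA, num_le⟩ := exists_abs_sin_mul_fwdDiff_le hz hper h₁ h₂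
  intro b hb
  rcases eq_or_ne b 0 with rfl | hb0
  · have kernel_le : ∀ t ∈ Icc (-π) π,
        ‖velocityKernel (Δ_[t] z α) (Δ_[t] (deriv z) α).1‖ ≤ A * t ^ 2 / c := fun t ht ↦
      abs_div_le_div_of_le_mul hc (sq_nonneg t) (by positivity)
        ((num_le t).trans_eq (by ring)) (gap_ge α t (abs_le.2 ht))
    have kernel_zero : velocityKernel (Δ_[0] z α) (Δ_[0] (deriv z) α).1 = 0 := by
      simp [velocityKernel, fwdDiff]
    have bound_tendsto : Tendsto (fun t : ℝ ↦ A * t ^ 2 / c) (𝓝[Icc (-π) π] 0) (𝓝 0) := by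
      have : Continuous fun t : ℝ ↦ A * t ^ 2 / c := by fun_prop
      simpa using (this.tendsto 0).mono_left nhdsWithin_le_nhds
    rw [ContinuousWithinAt, kernel_zero]
    exact squeeze_zero_norm' (eventually_nhdsWithin_of_forall kernel_le) bound_tendsto
  · have hw := continuous_fwdDiff_step hz.continuous α
    have hu := continuous_fwdDiff_step (hz.continuous_deriv (by norm_num)) α
    exact (((Real.continuous_sin.comp hw.fst).mul hu.fst).continuousAt.div
      (continuous_chordGap.comp hw).continuousAt
      (chordGap_fwdDiff_ne_zero hper harc α (abs_le.2 hb) hb0)).continuousWithinAt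

lemma velocityKernel_fwdDiff_pi (hper : PerCurve z) (α : ℝ) :
    velocityKernel (Δ_[π] z α) (Δ_[π] (deriv z) α).1 =
      velocityKernel (Δ_[-π] z α) (Δ_[-π] (deriv z) α).1 := by
  have z_eq : Δ_[π] z α = Δ_[-π] z α + ((1 : ℤ) * (2 * π), 0) := by
    have := hper (α + -π)
    rw [show α + -π + 2 * π = α + π by ring] at this
    rw [fwdDiff, fwdDiff, this, Int.cast_one, one_mul]
    abel
  have z'_eq : Δ_[π] (deriv z) α = Δ_[-π] (deriv z) α := by
    have := perCurve_periodic_deriv hper (α + -π)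
    rw [show α + -π + 2 * π = α + π by ring] at this
    rw [fwdDiff, fwdDiff, this]
  simp only [velocityKernel, z_eq, z'_eq, chordGap_add_int_mul_two_pi, Prod.fst_add,
    Real.sin_add_int_mul_two_pi]

/-- The integrands of the two sides differ by the total derivative in `b` of the kernel. -/
lemma integral_velocityKernelDeriv_eq (hz : ContDiff ℝ 3 z) (hper : PerCurve z)
    (harc : ArcChord z) (h₁ : (deriv z α).1 = 0) (h₂ : (deriv (deriv z) α).1 = 0) :
    ∫ b in (-π)..π, velocityKernelDeriv (Δ_[b] z α) (Δ_[b] (deriv z) α)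
        (Δ_[b] (deriv z) α).1 (Δ_[b] (deriv (deriv z)) α).1 =
      (deriv z α).2 *
        ∫ b in (-π)..π, tangencyDensity (Δ_[b] z α) (Δ_[b] (deriv z) α).1 := by
  have hz' : Differentiable ℝ (deriv z) := ContDiff.differentiable hz.deriv' two_ne_zero
  have neg_pi_le : -π ≤ π := by linarith [Real.pi_pos]
  have integrable_deriv := intervalIntegrable_velocityKernelDeriv hz hper harc α
  have integrable_density :=
    (intervalIntegrable_tangencyDensity hz hper harc h₁ h₂).const_mul (deriv z α).2
  have hasDerivAt_kernel : ∀ b ∈ Ioo (-π) π \ {0},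
      HasDerivAt (fun b ↦ velocityKernel (Δ_[b] z α) (Δ_[b] (deriv z) α).1)
        (velocityKernelDeriv (Δ_[b] z α) (Δ_[b] (deriv z) α)
          (Δ_[b] (deriv z) α).1 (Δ_[b] (deriv (deriv z)) α).1 -
        (deriv z α).2 * tangencyDensity (Δ_[b] z α) (Δ_[b] (deriv z) α).1) b := by
    rintro b ⟨hb, hb0⟩
    refine (hasDerivAt_velocityKernel
      (hasDerivAt_fwdDiff_step (hz.differentiable three_ne_zero) b α)
      (hasDerivAt_fst_comp (hasDerivAt_fwdDiff_step hz' b α))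
      (chordGap_fwdDiff_ne_zero hper harc α (abs_le.2 ⟨hb.1.le, hb.2.le⟩) hb0)).congr_deriv ?_
    have fst_eq : (Δ_[b] (deriv (deriv z)) α).1 = (deriv (deriv z) (α + b)).1 := by
      rw [fwdDiff, Prod.fst_sub, h₂, sub_zero]
    rw [fst_eq,
      ← velocityKernelDeriv_sub_eq (w' := deriv z (α + b)) (u' := (deriv (deriv z) (α + b)).1) h₁]
    exact (sub_sub_cancel _ _).symm
  have ftc := integral_eq_of_hasDerivAt_off_countable_of_le _ _ neg_pi_le (countable_singleton 0)
    (continuousOn_velocityKernel_fwdDiff hz hper harc h₁ h₂) hasDerivAt_kernel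
    (integrable_deriv.sub integrable_density)
  rw [velocityKernel_fwdDiff_pi hper, sub_self,
    intervalIntegral.integral_sub integrable_deriv integrable_density, sub_eq_zero] at ftc
  rw [ftc, intervalIntegral.integral_const_mul]

theorem hasDerivAt_v1_of_vertical_tangent (hz : ContDiff ℝ 3 z) (hper : PerCurve z)
    (harc : ArcChord z) (h₁ : (deriv z α).1 = 0) (h₂ : (deriv (deriv z) α).1 = 0) :
    HasDerivAt (v1 z) ((deriv z α).2 *
      ∫ b in (-π)..π, tangencyDensity (Δ_[b] z α) (Δ_[b] (deriv z) α).1) α :=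
  integral_velocityKernelDeriv_eq hz hper harc h₁ h₂ ▸ hasDerivAt_v1 hz hper harc α

end VerticalTangent

end Velocity

section TangentCurve

/-- The curves `(x - sin x, sin x ((1 + cos x)^(k+1) - 1))`. Their tangent at `0` is vertical, and
as `k → ∞` the height blows up on `(0, π/2)` but stays in `[-1, 0]` on `(π/2, π)`. -/
def tangentCurve (k : ℕ) (x : ℝ) : ℝ × ℝ := (x - sin x, sin x * ((1 + cos x) ^ (k + 1) - 1))

variable (k : ℕ)

lemma analyticAt_tangentCurve (x : ℝ) : AnalyticAt ℝ (tangentCurve k) x :=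
  (analyticAt_id.sub Real.analyticAt_sin).prod <| Real.analyticAt_sin.mul <|
    ((analyticAt_const.add Real.analyticAt_cos).pow _).sub analyticAt_const

lemma contDiff_tangentCurve {n : WithTop ℕ∞} : ContDiff ℝ n (tangentCurve k) :=
  contDiff_iff_contDiffAt.2 fun x ↦ (analyticAt_tangentCurve k x).contDiffAt

lemma perCurve_tangentCurve : PerCurve (tangentCurve k) := fun x ↦ by
  simp [tangentCurve, add_sub_right_comm]

lemma tangentCurve_neg (x : ℝ) : tangentCurve k (-x) = -tangentCurve k x := by
  ext <;> simp [tangentCurve]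
  ring

lemma hasDerivAt_fst_tangentCurve (x : ℝ) :
    HasDerivAt (fun a ↦ (tangentCurve k a).1) (1 - cos x) x :=
  (hasDerivAt_id x).sub (Real.hasDerivAt_sin x)

lemma hasDerivAt_snd_tangentCurve_zero :
    HasDerivAt (fun a ↦ (tangentCurve k a).2) (2 ^ (k + 1) - 1) 0 := by
  have hpow := (((Real.hasDerivAt_cos 0).const_add 1).pow (k + 1)).sub_const 1
  refine ((Real.hasDerivAt_sin 0).mul hpow).congr_deriv ?_
  simp [one_add_one_eq_two]

lemma deriv_tangentCurve_fst (x : ℝ) : (deriv (tangentCurve k) x).1 = 1 - cos x :=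
  (hasDerivAt_fst_comp ((analyticAt_tangentCurve k x).differentiableAt.hasDerivAt)).unique
    (hasDerivAt_fst_tangentCurve k x)

lemma deriv_tangentCurve_zero_snd : (deriv (tangentCurve k) 0).2 = 2 ^ (k + 1) - 1 :=
  (hasDerivAt_snd_comp ((analyticAt_tangentCurve k 0).differentiableAt.hasDerivAt)).unique
    (hasDerivAt_snd_tangentCurve_zero k)

lemma deriv_tangentCurve_zero_snd_pos : 0 < (deriv (tangentCurve k) 0).2 := by
  rw [deriv_tangentCurve_zero_snd, sub_pos]
  exact one_lt_pow₀ one_lt_two k.succ_ne_zero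

lemma deriv_deriv_tangentCurve_zero_fst : (deriv (deriv (tangentCurve k)) 0).1 = 0 := by
  have hdiff : Differentiable ℝ (deriv (tangentCurve k)) :=
    ContDiff.differentiable (n := 1) (contDiff_tangentCurve k).deriv' one_ne_zero
  have h := hasDerivAt_fst_comp (hdiff 0).hasDerivAt
  simp only [deriv_tangentCurve_fst] at h
  simpa using h.unique ((Real.hasDerivAt_cos 0).const_sub 1)

lemma deriv_tangentCurve_ne_zero (x : ℝ) : deriv (tangentCurve k) x ≠ 0 := by
  intro h
  have cos_eq : cos x = 1 := by
    have := deriv_tangentCurve_fst k x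
    rw [h, Prod.fst_zero] at this
    linarith
  obtain ⟨n, rfl⟩ := (Real.cos_eq_one_iff x).1 cos_eq
  rw [(perCurve_periodic_deriv (perCurve_tangentCurve k)).int_mul_eq] at h
  exact (deriv_tangentCurve_zero_snd_pos k).ne' (by rw [h, Prod.snd_zero])

lemma arcChord_tangentCurve : ArcChord (tangentCurve k) :=
  arcChord_of_regular_of_injective (contDiff_tangentCurve k) (perCurve_tangentCurve k)
    (deriv_tangentCurve_ne_zero k) fun _ _ ↦
      eq_int_mul_two_pi_of_chordGap_eq_zero (perCurve_tangentCurve k) strictMono_sub_sin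

lemma fwdDiff_tangentCurve_zero (b : ℝ) : Δ_[b] (tangentCurve k) 0 = tangentCurve k b := by
  simp [fwdDiff, tangentCurve]

lemma fwdDiff_deriv_tangentCurve_zero_fst (b : ℝ) :
    (Δ_[b] (deriv (tangentCurve k)) 0).1 = 1 - cos b := by
  simp [fwdDiff, deriv_tangentCurve_fst]

/-- `tangencyDensity` along `tangentCurve k` at the point with vertical tangent. -/
def curveDensity (b : ℝ) : ℝ := tangencyDensity (tangentCurve k b) (1 - cos b)

lemma measurable_curveDensity : Measurable (curveDensity k) :=
  measurable_tangencyDensity (contDiff_tangentCurve k (n := 0)).continuous.measurable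
    (by fun_prop)

lemma intervalIntegrable_curveDensity : IntervalIntegrable (curveDensity k) volume (-π) π := by
  have := intervalIntegrable_tangencyDensity (contDiff_tangentCurve k) (perCurve_tangentCurve k)
    (arcChord_tangentCurve k) (α := 0) (by simp [deriv_tangentCurve_fst])
    (deriv_deriv_tangentCurve_zero_fst k)
  simp only [fwdDiff_tangentCurve_zero, fwdDiff_deriv_tangentCurve_zero_fst] at this
  exact this

lemma hasDerivAt_v1_tangentCurve : HasDerivAt (v1 (tangentCurve k))
    ((deriv (tangentCurve k) 0).2 * ∫ b in (-π)..π, curveDensity k b) 0 := by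
  have := hasDerivAt_v1_of_vertical_tangent (contDiff_tangentCurve k) (perCurve_tangentCurve k)
    (arcChord_tangentCurve k) (α := 0) (by simp [deriv_tangentCurve_fst])
    (deriv_deriv_tangentCurve_zero_fst k)
  simp only [fwdDiff_tangentCurve_zero, fwdDiff_deriv_tangentCurve_zero_fst] at this
  exact this

lemma curveDensity_neg (b : ℝ) : curveDensity k (-b) = curveDensity k b := by
  simp [curveDensity, tangentCurve_neg, tangencyDensity, chordGap]

lemma chordGap_tangentCurve_zero_le {x : ℝ} (hsin : 0 ≤ sin x) (hcos : 0 ≤ cos x) :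
    chordGap (tangentCurve 0 x) ≤ chordGap (tangentCurve k x) := by
  have height_nonneg : 0 ≤ sin x * ((1 + cos x) ^ (0 + 1) - 1) := by
    simpa using mul_nonneg hsin hcos
  have height_le :
      sin x * ((1 + cos x) ^ (0 + 1) - 1) ≤ sin x * ((1 + cos x) ^ (k + 1) - 1) := by
    gcongr
    · linarith
    · exact k.zero_le
  refine sub_le_sub_right (Real.cosh_le_cosh.2 ?_) _
  exact abs_le_abs_of_nonneg height_nonneg height_le

lemma tendsto_chordGap_tangentCurve {x : ℝ} (hsin : 0 < sin x) (hcos : 0 < cos x) :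
    Tendsto (fun k ↦ chordGap (tangentCurve k x)) atTop atTop := by
  have height_tendsto : Tendsto (fun k ↦ (tangentCurve k x).2) atTop atTop := by
    refine Tendsto.const_mul_atTop hsin (tendsto_atTop_add_const_right _ _ ?_)
    exact (tendsto_pow_atTop_atTop_of_one_lt (by linarith)).comp (tendsto_add_atTop_nat 1)
  refine tendsto_atTop_mono (fun k ↦ ?_)
    (((tendsto_pow_atTop two_ne_zero).comp height_tendsto).atTop_div_const two_pos)
  have := one_add_sq_div_two_le_cosh (tangentCurve k x).2
  have := Real.cos_le_one (tangentCurve k x).1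
  rw [Function.comp_apply, chordGap]
  linarith

lemma tendsto_curveDensity {x : ℝ} (hsin : 0 < sin x) (hcos : 0 < cos x) :
    Tendsto (fun k ↦ curveDensity k x) atTop (𝓝 0) := by
  have gap_tendsto := tendsto_chordGap_tangentCurve hsin hcos
  refine squeeze_zero_norm (fun k ↦ abs_tangencyDensity_le (tangentCurve k x) (1 - cos x)) ?_
  have first := (gap_tendsto.const_div_atTop (sin (x - sin x) * (1 - cos x))).abs
  have second := (((tendsto_pow_atTop two_ne_zero).comp gap_tendsto).const_div_atTop
    (sin (x - sin x) * (1 - cos x))).abs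
  simpa [tangentCurve] using first.add second

lemma exists_abs_curveDensity_le :
    ∃ C, ∀ k, ∀ x ∈ Icc 0 (π / 2), |curveDensity k x| ≤ C := by
  obtain ⟨c, hc, gap_ge⟩ := (arcChord_iff (perCurve_tangentCurve 0)).1 (arcChord_tangentCurve 0)
  obtain ⟨A, hA, num_le⟩ := exists_abs_sin_mul_fwdDiff_le (contDiff_tangentCurve 0)
    (perCurve_tangentCurve 0) (α := 0) (by simp [deriv_tangentCurve_fst])
    (deriv_deriv_tangentCurve_zero_fst 0)
  simp only [fwdDiff_tangentCurve_zero, fwdDiff_deriv_tangentCurve_zero_fst] at num_le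
  refine ⟨A * (π / 2) ^ 2 / c + A / c ^ 2, fun k x ⟨hx₀, hx₁⟩ ↦ ?_⟩
  have hsin : 0 ≤ sin x := Real.sin_nonneg_of_nonneg_of_le_pi hx₀ (by linarith)
  have hcos : 0 ≤ cos x := Real.cos_nonneg_of_neg_pi_div_two_le_of_le (by linarith) hx₁
  have hgap := gap_ge 0 x (abs_le.2 ⟨by linarith, by linarith⟩)
  rw [fwdDiff_tangentCurve_zero] at hgap
  refine (abs_tangencyDensity_le_of_le_chordGap (w := tangentCurve k x) hc hA (num_le x)
    (hgap.trans (chordGap_tangentCurve_zero_le k hsin hcos))).trans ?_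
  gcongr

lemma tendsto_integral_curveDensity :
    Tendsto (fun k ↦ ∫ x in (0 : ℝ)..(π / 2), curveDensity k x) atTop (𝓝 0) := by
  obtain ⟨C, hC⟩ := exists_abs_curveDensity_le
  have pi_pos := Real.pi_pos
  have dominated := intervalIntegral.tendsto_integral_filter_of_dominated_convergence
    (μ := volume) (a := 0) (b := π / 2) (F := curveDensity) (f := fun _ ↦ 0) (l := atTop)
    (fun _ ↦ C)
    (.of_forall fun k ↦ (measurable_curveDensity k).aestronglyMeasurable)
    (.of_forall fun k ↦ .of_forall fun x hx ↦ hC k x ?mem) intervalIntegrable_const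
    (.of_forall fun x hx ↦ ?tendsto)
  · simpa using dominated
  all_goals rw [uIoc_of_le (by linarith)] at hx
  case mem => exact Ioc_subset_Icc_self hx
  case tendsto =>
    rcases hx.2.eq_or_lt with rfl | hx_lt
    · simp [curveDensity, tangencyDensity, tangentCurve]
    · exact tendsto_curveDensity (Real.sin_pos_of_pos_of_lt_pi hx.1 (by linarith))
        (Real.cos_pos_of_mem_Ioo ⟨by linarith [hx.1], hx_lt⟩)

/-- An upper bound for `curveDensity k` on `[π/2, π]`, uniform in `k`. -/
def outerMajorant (x : ℝ) : ℝ :=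
  sin (x - sin x) * (1 - cos x) * sinh (sin x * cos x) / (cosh 1 + 1) ^ 2

lemma continuous_outerMajorant : Continuous outerMajorant := by
  unfold outerMajorant; fun_prop

lemma integral_outerMajorant_neg : ∫ x in (π / 2)..π, outerMajorant x < 0 := by
  have pi_pos := Real.pi_pos
  rw [← neg_pos, ← intervalIntegral.integral_neg]
  refine intervalIntegral.intervalIntegral_pos_of_pos_on
    (continuous_outerMajorant.neg.intervalIntegrable _ _) (fun x ⟨hx₀, hx₁⟩ ↦ ?_) (by linarith)
  have hsin : 0 < sin x := Real.sin_pos_of_pos_of_lt_pi (by linarith) hx₁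
  have hcos : cos x < 0 := Real.cos_neg_of_pi_div_two_lt_of_lt hx₀ (by linarith)
  have hsin' : 0 < sin (x - sin x) :=
    Real.sin_pos_of_pos_of_lt_pi (sub_pos.2 (Real.sin_lt (by linarith))) (by linarith)
  have hsinh : sinh (sin x * cos x) < 0 := Real.sinh_neg_iff.2 (mul_neg_of_pos_of_neg hsin hcos)
  have := Real.cosh_pos 1
  exact neg_pos.2 (div_neg_of_neg_of_pos
    (mul_neg_of_pos_of_neg (mul_pos hsin' (by linarith)) hsinh) (by positivity))

lemma chordGap_tangentCurve_le {x : ℝ} (hcos : cos x ≤ 0) :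
    chordGap (tangentCurve k x) ≤ cosh 1 + 1 := by
  have base_nonneg : 0 ≤ 1 + cos x := by linarith [Real.neg_one_le_cos x]
  have abs_factor_le : |(1 + cos x) ^ (k + 1) - 1| ≤ 1 := by
    have := pow_nonneg base_nonneg (k + 1)
    have := pow_le_one₀ (n := k + 1) base_nonneg (by linarith)
    exact abs_le.2 ⟨by linarith, by linarith⟩
  have abs_height_le : |(tangentCurve k x).2| ≤ |1| := by
    rw [tangentCurve, abs_mul, abs_one]
    exact mul_le_one₀ (Real.abs_sin_le_one x) (abs_nonneg _) abs_factor_le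
  have := Real.cosh_le_cosh.2 abs_height_le
  have := Real.neg_one_le_cos (tangentCurve k x).1
  rw [chordGap]
  linarith

lemma curveDensity_le_outerMajorant {x : ℝ} (hx : x ∈ Icc (π / 2) π) :
    curveDensity k x ≤ outerMajorant x := by
  have pi_pos := Real.pi_pos
  have hx₀ : 0 < x := by linarith [hx.1]
  have hsin : 0 ≤ sin x := Real.sin_nonneg_of_nonneg_of_le_pi hx₀.le hx.2
  have hcos : cos x ≤ 0 := Real.cos_nonpos_of_pi_div_two_le_of_le hx.1 (by linarith [hx.2])
  have neg_one_le_cos := Real.neg_one_le_cos x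
  have hsin' : 0 ≤ sin (x - sin x) :=
    Real.sin_nonneg_of_nonneg_of_le_pi (sub_nonneg.2 (Real.sin_le hx₀.le)) (by linarith [hx.2])
  have height_le : (tangentCurve k x).2 ≤ sin x * cos x := by
    have := pow_le_of_le_one (by linarith) (by linarith : 1 + cos x ≤ 1) k.succ_ne_zero
    exact mul_le_mul_of_nonneg_left (sub_le_iff_le_add'.2 this) hsin
  have gap_pos : 0 < chordGap (tangentCurve k x) := by
    refine (chordGap_nonneg _).lt_of_ne' ?_
    rw [← fwdDiff_tangentCurve_zero]
    exact chordGap_fwdDiff_ne_zero (perCurve_tangentCurve k) (arcChord_tangentCurve k) 0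
      ((abs_of_pos hx₀).trans_le hx.2) hx₀.ne'
  have sinh_nonpos : sinh (sin x * cos x) ≤ 0 :=
    Real.sinh_nonpos_iff.2 (mul_nonpos_of_nonneg_of_nonpos hsin hcos)
  have factor_nonneg : 0 ≤ sin (x - sin x) * (1 - cos x) := mul_nonneg hsin' (by linarith)
  calc curveDensity k x
      ≤ sin (x - sin x) * (1 - cos x) * sinh (sin x * cos x) / chordGap (tangentCurve k x) ^ 2 :=
        div_le_div_of_nonneg_right (mul_le_mul_of_nonneg_left (Real.sinh_le_sinh.2 height_le)
          factor_nonneg) (sq_nonneg _)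
    _ ≤ outerMajorant x := by
        rw [outerMajorant, div_eq_mul_inv, div_eq_mul_inv]
        refine mul_le_mul_of_nonpos_left (inv_anti₀ (by positivity) ?_)
          (mul_nonpos_of_nonneg_of_nonpos factor_nonneg sinh_nonpos)
        exact pow_le_pow_left₀ gap_pos.le (chordGap_tangentCurve_le k hcos) 2

lemma exists_integral_curveDensity_neg : ∃ k, ∫ x in (-π)..π, curveDensity k x < 0 := by
  have pi_pos := Real.pi_pos
  obtain ⟨k, inner_lt⟩ := (tendsto_integral_curveDensity.eventually_lt_const
    (neg_pos.2 integral_outerMajorant_neg)).exists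
  refine ⟨k, ?_⟩
  have integrable_on {a b : ℝ} (ha : -π ≤ a) (hab : a ≤ b) (hb : b ≤ π) :
      IntervalIntegrable (curveDensity k) volume a b :=
    (intervalIntegrable_curveDensity k).mono_set (by
      rw [uIcc_of_le hab, uIcc_of_le (by linarith)]
      exact Icc_subset_Icc ha hb)
  have integral_left :
      ∫ x in (-π)..0, curveDensity k x = ∫ x in (0 : ℝ)..π, curveDensity k x := by
    simpa [curveDensity_neg] using
      (intervalIntegral.integral_comp_neg (a := 0) (b := π) (curveDensity k)).symm
  have integral_outer_le :
      ∫ x in (π / 2)..π, curveDensity k x ≤ ∫ x in (π / 2)..π, outerMajorant x :=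
    intervalIntegral.integral_mono_on (by linarith)
      (integrable_on (by linarith) (by linarith) le_rfl)
      (continuous_outerMajorant.intervalIntegrable _ _)
      fun x hx ↦ curveDensity_le_outerMajorant k hx
  have split_zero := intervalIntegral.integral_add_adjacent_intervals
    (integrable_on le_rfl (neg_nonpos.2 pi_pos.le) pi_pos.le)
    (integrable_on (neg_nonpos.2 pi_pos.le) pi_pos.le le_rfl)
  have split_half := intervalIntegral.integral_add_adjacent_intervals
    (integrable_on (a := 0) (b := π / 2) (by linarith) (by linarith) (by linarith))
    (integrable_on (by linarith) (by linarith) le_rfl)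
  linarith

end TangentCurve

/-- There exists an analytic periodic curve, odd, satisfying the arc-chord
condition, with a vertical tangent at `α = 0` (and strictly increasing first
component elsewhere), whose horizontal Muskat velocity has strictly negative
derivative at `α = 0`. -/
theorem exists_curve_vertical_tangent_negative_velocity_derivative :
    ∃ z : ℝ → ℝ × ℝ,
      (∀ α : ℝ, AnalyticAt ℝ z α) ∧ PerCurve z ∧ ArcChord z ∧
      (∀ α : ℝ, z (-α) = - z α) ∧
      (∀ α : ℝ, (¬ ∃ k : ℤ, α = 2 * π * k) → 0 < deriv (fun a => (z a).1) α) ∧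
      deriv (fun a => (z a).1) 0 = 0 ∧
      0 < deriv (fun a => (z a).2) 0 ∧
      ∃ d : ℝ, d < 0 ∧ HasDerivAt (v1 z) d 0 := by
  obtain ⟨k, integral_neg⟩ := exists_integral_curveDensity_neg
  refine ⟨tangentCurve k, analyticAt_tangentCurve k, perCurve_tangentCurve k,
    arcChord_tangentCurve k, tangentCurve_neg k, fun α hα ↦ ?_, ?_, ?_, _,
    mul_neg_of_pos_of_neg (deriv_tangentCurve_zero_snd_pos k) integral_neg,
    hasDerivAt_v1_tangentCurve k⟩
  · rw [(hasDerivAt_fst_tangentCurve k α).deriv, sub_pos]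
    refine (Real.cos_le_one α).lt_of_ne fun h ↦ hα ?_
    obtain ⟨n, hn⟩ := (Real.cos_eq_one_iff α).1 h
    exact ⟨n, by rw [← hn, mul_comm]⟩
  · rw [(hasDerivAt_fst_tangentCurve k 0).deriv, Real.cos_zero, sub_self]
  · rw [(hasDerivAt_snd_tangentCurve_zero k).deriv, ← deriv_tangentCurve_zero_snd]
    exact deriv_tangentCurve_zero_snd_pos k
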